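/- Let M = (M_0, M_1, M_2, …) be an increasing sequence of positive real numbers with M_0 = 1 that is logarithmically convex, satisfies lim_{j→∞} (M_j)^{1/j} = ∞, and satisfies sup_{j≥1} (M_{j+1}/M_j)^{1/j} < ∞. Then the Denjoy-Carleman classes are closed under composition: if U ⊆ ℝ^N and V ⊆ ℝ^P are open sets, f ∈ C^ℝ_M(V), and g = (g_1, …, g_P) : U → V is a map with g_j ∈ C^ℝ_M(U) for 1 ≤ j ≤ P, then f ∘ g ∈ C^ℝ_M(U). -/

import Mathlib

/-- The `i`-th partial derivative of a function on Euclidean space. -/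
noncomputable def pd {ι : Type} [Fintype ι] [DecidableEq ι] {W : Type} [NormedAddCommGroup W]
    [NormedSpace ℝ W] (i : ι) (f : EuclideanSpace ℝ ι → W) : EuclideanSpace ℝ ι → W :=
  fun x => fderiv ℝ f x (EuclideanSpace.single i 1)

/-- The multi-index derivative `D^α f`. -/
noncomputable def mderiv {ι : Type} [Fintype ι] [DecidableEq ι] {W : Type} [NormedAddCommGroup W]
    [NormedSpace ℝ W] (α : ι → ℕ) (f : EuclideanSpace ℝ ι → W) : EuclideanSpace ℝ ι → W :=
  (Finset.univ : Finset ι).toList.foldr (fun i g => (pd i)^[α i] g) f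

/-- Membership in the real Denjoy-Carleman class `C^ℝ_M(U)`: `f` is `C^∞` on `U` and on every
compact `K ⊆ U` there are `A, B > 0` with `|(1/α!) D^α f(x)| ≤ A B^{|α|} M_{|α|}`. -/
def CRM {ι : Type} [Fintype ι] [DecidableEq ι] (M : ℕ → ℝ)
    (U : Set (EuclideanSpace ℝ ι)) (f : EuclideanSpace ℝ ι → ℝ) : Prop :=
  ContDiffOn ℝ (⊤ : ℕ∞) f U ∧
  ∀ K : Set (EuclideanSpace ℝ ι), K ⊆ U → IsCompact K →
    ∃ A B : ℝ, 0 < A ∧ 0 < B ∧ ∀ x ∈ K, ∀ α : ι → ℕ,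
      (1 / (∏ i, ((α i).factorial : ℝ))) * |mderiv α f x| ≤
        A * B ^ (∑ i, α i) * M (∑ i, α i)

/-!
A coordinate-free reformulation of the classes replaces the partial derivatives `D^α f`, `|α| = n`,
by the norm of the `n`-th Fréchet derivative: in dimension `N` the two are comparable up to a
factor `N ^ n`, and `α! ≤ |α|! ≤ N ^ |α| * α!`. The composition is then estimated by Faà di Bruno's
formula, a sum over the set partitions of `{1, …, n}`. If the `j`-th derivatives are bounded by
`j! * M j`, a partition with blocks of sizes `s₁, …, sₖ` contributes `k! * M k * ∏ sᵢ! * M sᵢ`. A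
partition of `{1, …, n + 1}` arises from one of `{1, …, n}` by adding a singleton block or by
enlarging a block, and, since the ratios `M (j + 1) / M j` increase, these operations multiply the
contribution by at most `M 1 * (k + 1) * M (n + 1) / M n` and `(sᵢ + 1) * M (n + 1) / M n`
respectively. As `k ≤ n` and `∑ sᵢ = n`, the total grows from `n` to `n + 1` by a factor at most
`(M 1 + 2) * (n + 1) * M (n + 1) / M n`, hence stays below `(M 1 + 2) ^ n * n! * M n`.
-/

open scoped Nat ContDiff

section PartialDerivatives

variable {ι W : Type} [Fintype ι] [DecidableEq ι] [NormedAddCommGroup W] [NormedSpace ℝ W]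
  {U : Set (EuclideanSpace ℝ ι)} {f g : EuclideanSpace ℝ ι → W} {x : EuclideanSpace ℝ ι}

/-- The iterated partial derivative `∂_{i₁} ⋯ ∂_{iₙ} f` along a list `[i₁, …, iₙ]` of coordinates,
the ordered counterpart of `mderiv`. -/
noncomputable def pdList (l : List ι) (f : EuclideanSpace ℝ ι → W) : EuclideanSpace ℝ ι → W :=
  l.foldr pd f

/-- The list of coordinates, with multiplicities, along which `mderiv α` differentiates. -/
noncomputable def multiIndexList {ι : Type} [Fintype ι] (α : ι → ℕ) : List ι :=
  (Finset.univ : Finset ι).toList.flatMap fun i => List.replicate (α i) i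

theorem length_multiIndexList {ι : Type} [Fintype ι] (α : ι → ℕ) :
    (multiIndexList α).length = ∑ i, α i := by
  simp [multiIndexList, List.length_flatMap]

theorem count_multiIndexList (α : ι → ℕ) (i : ι) : (multiIndexList α).count i = α i := by
  simp [multiIndexList, List.count_flatMap, Function.comp_def, List.count_replicate]

theorem perm_multiIndexList_count (l : List ι) : l.Perm (multiIndexList fun i => l.count i) :=
  List.perm_iff_count.2 fun i => (count_multiIndexList (fun i => l.count i) i).symm

theorem pdList_append (l l' : List ι) (f : EuclideanSpace ℝ ι → W) :
    pdList (l ++ l') f = pdList l (pdList l' f) :=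
  List.foldr_append

theorem pdList_replicate (n : ℕ) (i : ι) (f : EuclideanSpace ℝ ι → W) :
    pdList (List.replicate n i) f = (pd i)^[n] f := by
  induction n with
  | zero => rfl
  | succ n ih => rw [List.replicate_succ, Function.iterate_succ_apply', ← ih]; rfl

theorem mderiv_eq_pdList (α : ι → ℕ) (f : EuclideanSpace ℝ ι → W) :
    mderiv α f = pdList (multiIndexList α) f := by
  unfold mderiv multiIndexList
  induction (Finset.univ : Finset ι).toList with
  | nil => rfl
  | cons i l ih => rw [List.foldr_cons, ih, List.flatMap_cons, pdList_append, pdList_replicate]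

theorem contDiffOn_pd (hU : IsOpen U) (hf : ContDiffOn ℝ ∞ f U) (i : ι) :
    ContDiffOn ℝ ∞ (pd i f) U :=
  (hf.fderiv_of_isOpen hU (m := ∞) (by simp)).clm_apply contDiffOn_const

theorem contDiffOn_pdList (hU : IsOpen U) (hf : ContDiffOn ℝ ∞ f U) (l : List ι) :
    ContDiffOn ℝ ∞ (pdList l f) U := by
  induction l with
  | nil => exact hf
  | cons i l ih => exact contDiffOn_pd hU ih i

theorem eqOn_pd (hU : IsOpen U) (h : Set.EqOn f g U) (i : ι) : Set.EqOn (pd i f) (pd i g) U :=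
  fun _ hx => by rw [pd, pd, (h.eventuallyEq_of_mem (hU.mem_nhds hx)).fderiv_eq]

theorem pd_pd_apply (hf : DifferentiableAt ℝ (fderiv ℝ f) x) (i j : ι) :
    pd i (pd j f) x =
      fderiv ℝ (fderiv ℝ f) x (EuclideanSpace.single i 1) (EuclideanSpace.single j 1) := by
  have h := hf.hasFDerivAt.clm_apply (hasFDerivAt_const (EuclideanSpace.single j (1 : ℝ)) x)
  change fderiv ℝ (fun y => fderiv ℝ f y (EuclideanSpace.single j 1)) x _ = _
  rw [h.fderiv]
  simp

theorem pd_comm (hf : ContDiffAt ℝ 2 f x) (i j : ι) : pd i (pd j f) x = pd j (pd i f) x := by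
  have hdiff : DifferentiableAt ℝ (fderiv ℝ f) x :=
    (hf.fderiv_right (m := 1) one_add_one_eq_two.le).differentiableAt one_ne_zero
  rw [pd_pd_apply hdiff, pd_pd_apply hdiff]
  exact hf.isSymmSndFDerivAt (by simp) _ _

theorem eqOn_pdList_of_perm (hU : IsOpen U) (hf : ContDiffOn ℝ ∞ f U) {l l' : List ι}
    (h : l.Perm l') : Set.EqOn (pdList l f) (pdList l' f) U := by
  induction h with
  | nil => exact Set.eqOn_refl _ _
  | cons i _ ih => exact eqOn_pd hU ih i
  | swap i j l =>
    intro x hx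
    have hl : ContDiffAt ℝ ∞ (pdList l f) x :=
      (contDiffOn_pdList hU hf l).contDiffAt (hU.mem_nhds hx)
    exact pd_comm (hl.of_le (by simpa using ENat.LEInfty.out)) j i
  | trans _ _ h₁ h₂ => exact h₁.trans h₂

theorem pdList_ofFn (hU : IsOpen U) (hf : ContDiffOn ℝ ∞ f U) {n : ℕ} (r : Fin n → ι) :
    Set.EqOn (pdList (List.ofFn r) f)
      (fun x => iteratedFDeriv ℝ n f x fun k => EuclideanSpace.single (r k) 1) U := by
  induction n with
  | zero => intro x _; simp [pdList]
  | succ n ih =>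
    intro x hx
    have hdiff : DifferentiableAt ℝ (iteratedFDeriv ℝ n f) x :=
      (hf.contDiffAt (hU.mem_nhds hx)).differentiableAt_iteratedFDeriv
        (by exact_mod_cast ENat.natCast_lt_top n)
    rw [List.ofFn_succ]
    calc pd (r 0) (pdList (List.ofFn fun k => r k.succ) f) x
        = pd (r 0) (fun y =>
            iteratedFDeriv ℝ n f y fun k => EuclideanSpace.single (r k.succ) 1) x :=
          eqOn_pd hU (ih _) (r 0) hx
      _ = iteratedFDeriv ℝ (n + 1) f x fun k => EuclideanSpace.single (r k) 1 :=
          (hdiff.iteratedFDeriv_succ_apply_left'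
            (m := fun k => EuclideanSpace.single (r k) 1)).symm

theorem norm_mderiv_le (hU : IsOpen U) (hf : ContDiffOn ℝ ∞ f U) (hx : x ∈ U) (α : ι → ℕ) :
    ‖mderiv α f x‖ ≤ ‖iteratedFDeriv ℝ (∑ i, α i) f x‖ := by
  rw [← length_multiIndexList, mderiv_eq_pdList]
  have h := pdList_ofFn hU hf (multiIndexList α).get hx
  rw [List.ofFn_get] at h
  simpa [h] using (iteratedFDeriv ℝ (multiIndexList α).length f x).le_opNorm
    fun k => EuclideanSpace.single ((multiIndexList α).get k) 1

theorem pdList_eq_mderiv_count (hU : IsOpen U) (hf : ContDiffOn ℝ ∞ f U) (hx : x ∈ U)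
    (l : List ι) : pdList l f x = mderiv (fun i => l.count i) f x := by
  rw [mderiv_eq_pdList]
  exact eqOn_pdList_of_perm hU hf (perm_multiIndexList_count l) hx

end PartialDerivatives

theorem opNorm_le_of_forall_orthonormalBasis {𝕜 E W ι κ : Type*} [RCLike 𝕜]
    [NormedAddCommGroup E] [InnerProductSpace 𝕜 E] [NormedAddCommGroup W] [NormedSpace 𝕜 W]
    [Fintype ι] [Fintype κ] (b : OrthonormalBasis ι 𝕜 E)
    (m : ContinuousMultilinearMap 𝕜 (fun _ : κ => E) W) {C : ℝ} (hC : 0 ≤ C)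
    (h : ∀ r : κ → ι, ‖m fun k => b (r k)‖ ≤ C) :
    ‖m‖ ≤ (Fintype.card ι : ℝ) ^ Fintype.card κ * C := by
  classical
  refine m.opNorm_le_bound (by positivity) fun v => ?_
  have hterm (r : κ → ι) : ‖m fun k => b.repr (v k) (r k) • b (r k)‖ ≤ C * ∏ k, ‖v k‖ := by
    rw [m.map_smul_univ, norm_smul, norm_prod, mul_comm]
    gcongr with k
    · exact h r
    · exact (PiLp.norm_apply_le _ _).trans_eq (b.repr.norm_map _)
  calc ‖m v‖ = ‖∑ r : κ → ι, m fun k => b.repr (v k) (r k) • b (r k)‖ := by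
        rw [← m.map_sum fun k i => b.repr (v k) i • b i]
        simp only [b.sum_repr]
    _ ≤ ∑ _r : κ → ι, C * ∏ k, ‖v k‖ := norm_sum_le_of_le _ fun r _ => hterm r
    _ = _ := by simp [mul_assoc]

theorem norm_iteratedFDeriv_le_of_mderiv {ι W : Type} [Fintype ι] [DecidableEq ι]
    [NormedAddCommGroup W] [NormedSpace ℝ W] {U : Set (EuclideanSpace ℝ ι)} (hU : IsOpen U)
    {f : EuclideanSpace ℝ ι → W} (hf : ContDiffOn ℝ ∞ f U) {x : EuclideanSpace ℝ ι} (hx : x ∈ U)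
    {n : ℕ} {C : ℝ} (hC : 0 ≤ C) (h : ∀ α : ι → ℕ, ∑ i, α i = n → ‖mderiv α f x‖ ≤ C) :
    ‖iteratedFDeriv ℝ n f x‖ ≤ (Fintype.card ι : ℝ) ^ n * C := by
  have hbasis (r : Fin n → ι) :
      ‖iteratedFDeriv ℝ n f x fun k => EuclideanSpace.basisFun ι ℝ (r k)‖ ≤ C := by
    have hsum : ∑ i, (List.ofFn r).count i = n := by
      rw [← length_multiIndexList, ← (perm_multiIndexList_count _).length_eq, List.length_ofFn]
    have hpartial := (pdList_ofFn hU hf r hx).symm.trans (pdList_eq_mderiv_count hU hf hx _)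
    simp only [EuclideanSpace.basisFun_apply, hpartial]
    exact h _ hsum
  simpa using opNorm_le_of_forall_orthonormalBasis (EuclideanSpace.basisFun ι ℝ) _ hC hbasis

theorem factorial_sum_le_card_pow_mul_prod_factorial {ι : Type*} [Fintype ι] (α : ι → ℕ) :
    (∑ i, α i)! ≤ Fintype.card ι ^ (∑ i, α i) * ∏ i, (α i)! := by
  classical
  have hmultinomial : Nat.multinomial Finset.univ α ≤ Fintype.card ι ^ (∑ i, α i) := by
    have hsum := Finset.sum_pow_eq_sum_piAntidiag (Finset.univ : Finset ι) (fun _ => 1) (∑ i, α i)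
    simp only [Finset.sum_const, Finset.card_univ, smul_eq_mul, mul_one, one_pow,
      Finset.prod_const_one, Nat.cast_id] at hsum
    rw [hsum]
    exact Finset.single_le_sum (f := Nat.multinomial Finset.univ) (fun _ _ => Nat.zero_le _)
      (by simp)
  rw [← Nat.multinomial_spec, mul_comm]
  gcongr

section FaaDiBruno

/-- The contribution `t ^ k * b k * ∏ b sᵢ` of a partition into `k` blocks of sizes `sᵢ` to Faà di
Bruno's formula for `f ∘ g`, when the `j`-th derivatives of `f` and `g` are bounded by `t ^ j * b j`
and `b j`. -/
noncomputable def faaDiBrunoWeight (b : ℕ → ℝ) (t : ℝ) {n : ℕ} (c : OrderedFinpartition n) : ℝ :=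
  t ^ c.length * b c.length * ∏ i, b (c.partSize i)

variable {b : ℕ → ℝ} {t R : ℝ} {n : ℕ}

theorem faaDiBrunoWeight_nonneg (hb : ∀ j, 0 ≤ b j) (ht : 0 ≤ t) (c : OrderedFinpartition n) :
    0 ≤ faaDiBrunoWeight b t c :=
  mul_nonneg (mul_nonneg (pow_nonneg ht _) (hb _)) (Finset.prod_nonneg fun _ _ => hb _)

theorem sum_partSize (c : OrderedFinpartition n) : ∑ i, c.partSize i = n := by
  simpa using c.sum_sigma_eq_sum fun _ : Fin n => (1 : ℕ)

theorem sum_orderedFinpartition_succ {A : Type*} [AddCommMonoid A]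
    (w : OrderedFinpartition (n + 1) → A) :
    ∑ c, w c = ∑ c : OrderedFinpartition n, (w c.extendLeft + ∑ i, w (c.extendMiddle i)) := by
  simp [← (OrderedFinpartition.extendEquiv n).sum_comp, Fintype.sum_sigma, Fintype.sum_option]

theorem faaDiBrunoWeight_extendLeft_le (hb : ∀ j, 0 ≤ b j) (ht : 0 ≤ t) (c : OrderedFinpartition n)
    (hR : b (c.length + 1) ≤ (c.length + 1) * R * b c.length) :
    faaDiBrunoWeight b t c.extendLeft ≤
      t * b 1 * (c.length + 1) * R * faaDiBrunoWeight b t c := by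
  have hprod : 0 ≤ ∏ i, b (c.partSize i) := Finset.prod_nonneg fun _ _ => hb _
  have hb1 := hb 1
  have hblocks : ∏ i, b (c.extendLeft.partSize i) = b 1 * ∏ i, b (c.partSize i) :=
    Fin.prod_univ_succ (n := c.length) _
  calc faaDiBrunoWeight b t c.extendLeft
      = t ^ (c.length + 1) * b (c.length + 1) * (b 1 * ∏ i, b (c.partSize i)) := by
        rw [faaDiBrunoWeight, hblocks, OrderedFinpartition.extendLeft_length]
    _ ≤ t ^ (c.length + 1) * ((c.length + 1) * R * b c.length) *
          (b 1 * ∏ i, b (c.partSize i)) := by gcongr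
    _ = _ := by rw [faaDiBrunoWeight]; ring

theorem faaDiBrunoWeight_extendMiddle_le (hb : ∀ j, 0 ≤ b j) (ht : 0 ≤ t)
    (c : OrderedFinpartition n) (i : Fin c.length)
    (hR : b (c.partSize i + 1) ≤ (c.partSize i + 1) * R * b (c.partSize i)) :
    faaDiBrunoWeight b t (c.extendMiddle i) ≤
      (c.partSize i + 1) * R * faaDiBrunoWeight b t c := by
  have hbl := hb c.length
  have hprod : 0 ≤ ∏ k ∈ Finset.univ.erase i, b (c.partSize k) :=
    Finset.prod_nonneg fun _ _ => hb _
  have hblocks : ∏ k, b ((c.extendMiddle i).partSize k) =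
      b (c.partSize i + 1) * ∏ k ∈ Finset.univ.erase i, b (c.partSize k) := by
    change ∏ k, b (Function.update c.partSize i (c.partSize i + 1) k) = _
    rw [← Finset.mul_prod_erase _ _ (Finset.mem_univ i), Function.update_self]
    congr 1
    exact Finset.prod_congr rfl fun k hk => by
      rw [Function.update_of_ne (Finset.ne_of_mem_erase hk)]
  calc faaDiBrunoWeight b t (c.extendMiddle i)
      = t ^ c.length * b c.length *
          (b (c.partSize i + 1) * ∏ k ∈ Finset.univ.erase i, b (c.partSize k)) := by
        rw [faaDiBrunoWeight, hblocks, OrderedFinpartition.extendMiddle_length]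
    _ ≤ t ^ c.length * b c.length * ((c.partSize i + 1) * R * b (c.partSize i) *
          ∏ k ∈ Finset.univ.erase i, b (c.partSize k)) := by gcongr
    _ = _ := by
        rw [faaDiBrunoWeight, ← Finset.mul_prod_erase _ _ (Finset.mem_univ i)]
        ring

theorem faaDiBrunoWeight_extend_sum_le (hb : ∀ j, 0 ≤ b j) (ht : 0 ≤ t) (hR₀ : 0 ≤ R)
    (hR : ∀ j ≤ n, b (j + 1) ≤ (j + 1) * R * b j) (c : OrderedFinpartition n) :
    faaDiBrunoWeight b t c.extendLeft + ∑ i, faaDiBrunoWeight b t (c.extendMiddle i) ≤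
      (t * b 1 + 2) * ((n + 1) * R) * faaDiBrunoWeight b t c := by
  have hw := faaDiBrunoWeight_nonneg hb ht c
  have hb1 := hb 1
  have hlength : (c.length : ℝ) ≤ n := mod_cast c.length_le
  have hsizes : ∑ i, ((c.partSize i : ℝ) + 1) = n + c.length := by
    rw [Finset.sum_add_distrib, ← Nat.cast_sum, sum_partSize]
    simp
  calc faaDiBrunoWeight b t c.extendLeft + ∑ i, faaDiBrunoWeight b t (c.extendMiddle i)
      ≤ t * b 1 * (c.length + 1) * R * faaDiBrunoWeight b t c +
          ∑ i, (c.partSize i + 1) * R * faaDiBrunoWeight b t c := by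
        gcongr with i
        · exact faaDiBrunoWeight_extendLeft_le hb ht c (hR _ c.length_le)
        · exact faaDiBrunoWeight_extendMiddle_le hb ht c i (hR _ (c.partSize_le i))
    _ = (t * b 1 * (c.length + 1) + (n + c.length)) * (R * faaDiBrunoWeight b t c) := by
        simp only [mul_assoc, ← Finset.sum_mul, hsizes]
        ring
    _ ≤ (t * b 1 * (n + 1) + 2 * (n + 1)) * (R * faaDiBrunoWeight b t c) := by
        gcongr
        linarith
    _ = _ := by ring

variable {M : ℕ → ℝ}

theorem factorial_mul_succ_le (hpos : ∀ j, 0 < M j) (hlog : Monotone fun j => M (j + 1) / M j)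
    {j : ℕ} (hj : j ≤ n) :
    (j + 1)! * M (j + 1) ≤ (j + 1) * (M (n + 1) / M n) * (j ! * M j) := by
  have hstep : M (j + 1) ≤ M (n + 1) / M n * M j := (div_le_iff₀ (hpos j)).1 (hlog hj)
  calc (j + 1)! * M (j + 1) = (j + 1) * j ! * M (j + 1) := by
        push_cast [Nat.factorial_succ]
        rfl
    _ ≤ (j + 1) * j ! * (M (n + 1) / M n * M j) := by gcongr
    _ = _ := by ring

theorem sum_faaDiBrunoWeight_le (hpos : ∀ j, 0 < M j) (hlog : Monotone fun j => M (j + 1) / M j)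
    (ht : 0 ≤ t) (n : ℕ) :
    ∑ c : OrderedFinpartition n, faaDiBrunoWeight (fun j => j ! * M j) t c ≤
      (t * M 1 + 2) ^ n * (n ! * M n) := by
  have hb (j : ℕ) : 0 ≤ j ! * M j := mul_nonneg (Nat.cast_nonneg _) (hpos j).le
  induction n with
  | zero => simp [faaDiBrunoWeight]
  | succ n ih =>
    have hM1 := hpos 1
    have hMn := hpos n
    have hR₀ : 0 ≤ M (n + 1) / M n := (div_pos (hpos _) hMn).le
    rw [sum_orderedFinpartition_succ]
    calc _ ≤ ∑ c : OrderedFinpartition n, (t * M 1 + 2) * ((n + 1) * (M (n + 1) / M n)) *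
            faaDiBrunoWeight (fun j => j ! * M j) t c :=
          Finset.sum_le_sum fun c _ => by
            simpa using faaDiBrunoWeight_extend_sum_le hb ht hR₀
              (fun j hj => factorial_mul_succ_le hpos hlog hj) c
      _ ≤ (t * M 1 + 2) * ((n + 1) * (M (n + 1) / M n)) *
            ((t * M 1 + 2) ^ n * (n ! * M n)) := by
          rw [← Finset.mul_sum]
          gcongr
      _ = _ := by
          rw [Nat.factorial_succ]
          push_cast
          field_simp
          ring

theorem norm_iteratedFDeriv_comp_le_of_logConvex {𝕜 E F W : Type*} [NontriviallyNormedField 𝕜]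
    [NormedAddCommGroup E] [NormedSpace 𝕜 E] [NormedAddCommGroup F] [NormedSpace 𝕜 F]
    [NormedAddCommGroup W] [NormedSpace 𝕜 W] (hpos : ∀ j, 0 < M j)
    (hlog : Monotone fun j => M (j + 1) / M j) {f : F → W} {g : E → F} {x : E}
    (hf : ContDiffAt 𝕜 n f (g x)) (hg : ContDiffAt 𝕜 n g x) {A B A' B' : ℝ}
    (hA : 0 ≤ A) (hB : 0 ≤ B) (hA' : 0 ≤ A') (hB' : 0 ≤ B')
    (hfbound : ∀ j, ‖iteratedFDeriv 𝕜 j f (g x)‖ ≤ A * B ^ j * (j ! * M j))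
    (hgbound : ∀ j, ‖iteratedFDeriv 𝕜 j g x‖ ≤ A' * B' ^ j * (j ! * M j)) :
    ‖iteratedFDeriv 𝕜 n (f ∘ g) x‖ ≤ A * (B' * (B * A' * M 1 + 2)) ^ n * (n ! * M n) := by
  have hterm (c : OrderedFinpartition n) :
      ‖(ftaylorSeries 𝕜 f (g x)).compAlongOrderedFinpartition (ftaylorSeries 𝕜 g x) c‖ ≤
        A * B' ^ n * faaDiBrunoWeight (fun j => j ! * M j) (B * A') c := by
    have hMl := hpos c.length
    calc _ ≤ ‖iteratedFDeriv 𝕜 c.length f (g x)‖ * ∏ i, ‖iteratedFDeriv 𝕜 (c.partSize i) g x‖ :=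
          c.norm_compAlongOrderedFinpartition_le _ _
      _ ≤ A * B ^ c.length * (c.length ! * M c.length) *
            ∏ i, A' * B' ^ c.partSize i * ((c.partSize i)! * M (c.partSize i)) := by
          gcongr
          · exact hfbound _
          · exact hgbound _
      _ = _ := by
          rw [Finset.prod_mul_distrib, Finset.prod_mul_distrib, Finset.prod_pow_eq_pow_sum,
            sum_partSize, Finset.prod_const, Finset.card_fin, faaDiBrunoWeight]
          ring
  calc ‖iteratedFDeriv 𝕜 n (f ∘ g) x‖
      ≤ ∑ c, A * B' ^ n * faaDiBrunoWeight (fun j => j ! * M j) (B * A') c := by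
        rw [iteratedFDeriv_comp hf hg le_rfl]
        exact norm_sum_le_of_le _ fun c _ => hterm c
    _ ≤ A * B' ^ n * ((B * A' * M 1 + 2) ^ n * (n ! * M n)) := by
        rw [← Finset.mul_sum]
        gcongr
        exact sum_faaDiBrunoWeight_le hpos hlog (by positivity) n
    _ = _ := by rw [mul_pow]; ring

end FaaDiBruno

section DenjoyCarleman

variable {𝕜 E F W : Type*} [NontriviallyNormedField 𝕜] [NormedAddCommGroup E] [NormedSpace 𝕜 E]
  [NormedAddCommGroup F] [NormedSpace 𝕜 F] [NormedAddCommGroup W] [NormedSpace 𝕜 W] {M : ℕ → ℝ}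

/-- The coordinate-free Denjoy-Carleman class of `M` on `U`, for maps between normed spaces: the
partial derivatives in the definition of `CRM` are replaced by the Fréchet derivatives, whose
normalization by `1 / n!` appears as the factor `n!` in the bound. -/
def DenjoyCarlemanOn (𝕜 : Type*) {E F : Type*} [NontriviallyNormedField 𝕜]
    [NormedAddCommGroup E] [NormedSpace 𝕜 E] [NormedAddCommGroup F] [NormedSpace 𝕜 F]
    (M : ℕ → ℝ) (f : E → F) (U : Set E) : Prop :=
  ContDiffOn 𝕜 ∞ f U ∧ ∀ K ⊆ U, IsCompact K → ∃ A B : ℝ, 0 ≤ A ∧ 0 ≤ B ∧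
    ∀ x ∈ K, ∀ n : ℕ, ‖iteratedFDeriv 𝕜 n f x‖ ≤ A * B ^ n * (n ! * M n)

theorem DenjoyCarlemanOn.comp (hpos : ∀ j, 0 < M j) (hlog : Monotone fun j => M (j + 1) / M j)
    {U : Set E} {V : Set F} (hU : IsOpen U) (hV : IsOpen V) {f : F → W} {g : E → F}
    (hf : DenjoyCarlemanOn 𝕜 M f V) (hg : DenjoyCarlemanOn 𝕜 M g U) (hgUV : Set.MapsTo g U V) :
    DenjoyCarlemanOn 𝕜 M (f ∘ g) U := by
  refine ⟨hf.1.comp hg.1 hgUV, fun K hKU hK => ?_⟩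
  obtain ⟨A, B, hA, hB, hfbound⟩ := hf.2 (g '' K) (hgUV.mono_left hKU).image_subset
    (hK.image_of_continuousOn (hg.1.continuousOn.mono hKU))
  obtain ⟨A', B', hA', hB', hgbound⟩ := hg.2 K hKU hK
  have hM1 := hpos 1
  refine ⟨A, B' * (B * A' * M 1 + 2), hA, by positivity, fun x hx n => ?_⟩
  have hfx : ContDiffAt 𝕜 ∞ f (g x) := hf.1.contDiffAt (hV.mem_nhds (hgUV (hKU hx)))
  have hgx : ContDiffAt 𝕜 ∞ g x := hg.1.contDiffAt (hU.mem_nhds (hKU hx))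
  have hn : (n : ℕ∞ω) ≤ ∞ := mod_cast le_top
  exact norm_iteratedFDeriv_comp_le_of_logConvex hpos hlog (hfx.of_le hn) (hgx.of_le hn)
    hA hB hA' hB' (hfbound _ (Set.mem_image_of_mem g hx)) (hgbound x hx)

end DenjoyCarleman

section Coordinates

theorem euclidean_norm_le_sum_norm {𝕜 κ : Type*} [RCLike 𝕜] [Fintype κ] (y : EuclideanSpace 𝕜 κ) :
    ‖y‖ ≤ ∑ j, ‖y j‖ := by
  classical
  calc ‖y‖ = ‖∑ j, y j • EuclideanSpace.basisFun κ 𝕜 j‖ := by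
        conv_lhs => rw [← (EuclideanSpace.basisFun κ 𝕜).sum_repr y]
        rfl
    _ ≤ ∑ j, ‖y j‖ := norm_sum_le_of_le _ fun j _ => by simp [norm_smul]

variable {𝕜 E κ : Type*} [RCLike 𝕜] [NormedAddCommGroup E] [NormedSpace 𝕜 E] [Fintype κ]
  {g : E → EuclideanSpace 𝕜 κ}

theorem norm_iteratedFDeriv_le_sum_coord {x : E} {n : ℕ} (hg : ContDiffAt 𝕜 n g x) :
    ‖iteratedFDeriv 𝕜 n g x‖ ≤ ∑ j, ‖iteratedFDeriv 𝕜 n (fun y => g y j) x‖ := by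
  have hcoord (j : κ) (v : Fin n → E) :
      iteratedFDeriv 𝕜 n g x v j = iteratedFDeriv 𝕜 n (fun y => g y j) x v :=
    congrArg (· v) ((EuclideanSpace.proj j).iteratedFDeriv_comp_left hg le_rfl).symm
  refine ContinuousMultilinearMap.opNorm_le_bound (by positivity) fun v => ?_
  calc ‖iteratedFDeriv 𝕜 n g x v‖
      ≤ ∑ j, ‖iteratedFDeriv 𝕜 n (fun y => g y j) x v‖ := by
        simpa only [hcoord] using euclidean_norm_le_sum_norm (iteratedFDeriv 𝕜 n g x v)
    _ ≤ ∑ j, ‖iteratedFDeriv 𝕜 n (fun y => g y j) x‖ * ∏ i, ‖v i‖ :=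
        Finset.sum_le_sum fun j _ => ContinuousMultilinearMap.le_opNorm _ _
    _ = _ := (Finset.sum_mul ..).symm

theorem DenjoyCarlemanOn.of_coord {M : ℕ → ℝ} (hM : ∀ j, 0 ≤ M j) {U : Set E} (hU : IsOpen U)
    (hg : ∀ j, DenjoyCarlemanOn 𝕜 M (fun x => g x j) U) : DenjoyCarlemanOn 𝕜 M g U := by
  have hsmooth : ContDiffOn 𝕜 ∞ g U := contDiffOn_euclidean.2 fun j => (hg j).1
  refine ⟨hsmooth, fun K hKU hK => ?_⟩
  choose A B hA hB hbound using fun j => (hg j).2 K hKU hK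
  refine ⟨∑ j, A j, ∑ j, B j, Finset.sum_nonneg fun j _ => hA j,
    Finset.sum_nonneg fun j _ => hB j, fun x hx n => ?_⟩
  have hgx : ContDiffAt 𝕜 ∞ g x := hsmooth.contDiffAt (hU.mem_nhds (hKU hx))
  have hMn := hM n
  calc ‖iteratedFDeriv 𝕜 n g x‖
      ≤ ∑ j, A j * B j ^ n * (n ! * M n) :=
        (norm_iteratedFDeriv_le_sum_coord (hgx.of_le (mod_cast le_top))).trans
          (Finset.sum_le_sum fun j _ => hbound j x hx n)
    _ ≤ ∑ j, A j * (∑ k, B k) ^ n * (n ! * M n) := by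
        gcongr with j
        · exact hA j
        · exact hB j
        · exact Finset.single_le_sum (fun k _ => hB k) (Finset.mem_univ j)
    _ = _ := by simp only [Finset.sum_mul]

end Coordinates

section Comparison

variable {ι : Type} [Fintype ι] [DecidableEq ι] {M : ℕ → ℝ} {U : Set (EuclideanSpace ℝ ι)}
  {f : EuclideanSpace ℝ ι → ℝ}

theorem CRM.denjoyCarlemanOn (hM : ∀ j, 0 ≤ M j) (hU : IsOpen U) (hf : CRM M U f) :
    DenjoyCarlemanOn ℝ M f U := by
  refine ⟨hf.1, fun K hKU hK => ?_⟩
  obtain ⟨A, B, hA, hB, hbound⟩ := hf.2 K hKU hK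
  refine ⟨A, Fintype.card ι * B, hA.le, by positivity, fun x hx n => ?_⟩
  have hMn := hM n
  have hmderiv (α : ι → ℕ) (hα : ∑ i, α i = n) : ‖mderiv α f x‖ ≤ n ! * (A * B ^ n * M n) := by
    have hfactorial : ∏ i, ((α i)! : ℝ) ≤ n ! := by
      rw [← hα]
      exact_mod_cast Nat.le_of_dvd (Nat.factorial_pos _) (Nat.prod_factorial_dvd_factorial_sum _ _)
    have h := hbound x hx α
    rw [one_div, inv_mul_le_iff₀ (by positivity), hα] at h
    exact h.trans (by gcongr)
  calc ‖iteratedFDeriv ℝ n f x‖ ≤ (Fintype.card ι : ℝ) ^ n * (n ! * (A * B ^ n * M n)) :=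
        norm_iteratedFDeriv_le_of_mderiv hU hf.1 (hKU hx) (by positivity) hmderiv
    _ = _ := by ring

theorem DenjoyCarlemanOn.crm (hM : ∀ j, 0 ≤ M j) (hU : IsOpen U) (hf : DenjoyCarlemanOn ℝ M f U) :
    CRM M U f := by
  refine ⟨hf.1, fun K hKU hK => ?_⟩
  obtain ⟨A, B, hA, hB, hbound⟩ := hf.2 K hKU hK
  refine ⟨A + 1, Fintype.card ι * B + 1, by positivity, by positivity, fun x hx α => ?_⟩
  have hMα := hM (∑ i, α i)
  have hfactorial : ((∑ i, α i)! : ℝ) ≤ Fintype.card ι ^ (∑ i, α i) * ∏ i, ((α i)! : ℝ) :=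
    mod_cast factorial_sum_le_card_pow_mul_prod_factorial α
  rw [one_div, inv_mul_le_iff₀ (by positivity)]
  calc |mderiv α f x| ≤ A * B ^ (∑ i, α i) * ((∑ i, α i)! * M (∑ i, α i)) :=
        (norm_mderiv_le hU hf.1 (hKU hx) α).trans (hbound x hx _)
    _ ≤ A * B ^ (∑ i, α i) *
          (Fintype.card ι ^ (∑ i, α i) * (∏ i, ((α i)! : ℝ)) * M (∑ i, α i)) := by gcongr
    _ = (∏ i, ((α i)! : ℝ)) * (A * (Fintype.card ι * B) ^ (∑ i, α i) * M (∑ i, α i)) := by ring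
    _ ≤ (∏ i, ((α i)! : ℝ)) *
          ((A + 1) * (Fintype.card ι * B + 1) ^ (∑ i, α i) * M (∑ i, α i)) := by
        gcongr <;> simp

end Comparison

theorem stmt5_general {ι κ : Type} [Fintype ι] [DecidableEq ι] [Fintype κ] [DecidableEq κ]
    {M : ℕ → ℝ} (hpos : ∀ j, 0 < M j) (hlog : Monotone fun j => M (j + 1) / M j)
    {U : Set (EuclideanSpace ℝ ι)} (hU : IsOpen U) {V : Set (EuclideanSpace ℝ κ)} (hV : IsOpen V)
    {f : EuclideanSpace ℝ κ → ℝ} (hf : CRM M V f)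
    {G : EuclideanSpace ℝ ι → EuclideanSpace ℝ κ} (hG : ∀ j, CRM M U fun x => G x j)
    (hmaps : Set.MapsTo G U V) :
    CRM M U fun x => f (G x) := by
  have hM (j : ℕ) : 0 ≤ M j := (hpos j).le
  have hG' : DenjoyCarlemanOn ℝ M G U := .of_coord hM hU fun j => (hG j).denjoyCarlemanOn hM hU
  exact ((hf.denjoyCarlemanOn hM hV).comp hpos hlog hU hV hG' hmaps).crm hM hU

/-- Denjoy-Carleman classes are closed under composition. -/
theorem stmt5 {N P : ℕ} (M : ℕ → ℝ)
    (hpos : ∀ j, 0 < M j) (hmono : Monotone M) (hM0 : M 0 = 1)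
    (hlog : ∀ j : ℕ, M (j+1) / M j ≤ M (j+2) / M (j+1))
    (hgrow : Filter.Tendsto (fun j : ℕ => M j ^ ((1 : ℝ) / j)) Filter.atTop Filter.atTop)
    (hder : ∃ C : ℝ, ∀ j : ℕ, 1 ≤ j → (M (j+1) / M j) ^ ((1 : ℝ) / j) ≤ C)
    (U : Set (EuclideanSpace ℝ (Fin N))) (hUopen : IsOpen U)
    (V : Set (EuclideanSpace ℝ (Fin P))) (hVopen : IsOpen V)
    (f : EuclideanSpace ℝ (Fin P) → ℝ) (hf : CRM M V f)
    (g : Fin P → EuclideanSpace ℝ (Fin N) → ℝ) (hg : ∀ j, CRM M U (g j))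
    (G : EuclideanSpace ℝ (Fin N) → EuclideanSpace ℝ (Fin P))
    (hG : ∀ x j, G x j = g j x)
    (hmaps : Set.MapsTo G U V) :
    CRM M U (fun x => f (G x)) := by
  exact stmt5_general hpos (monotone_nat_of_le_succ hlog) hUopen hVopen hf
    (fun j => by simpa only [hG] using hg j) hmaps
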